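/- For an ε-dissimilar M-player K-armed reward mean profile and any subpar arm i ∈ I_ε, the reciprocal of the minimum gap is bounded by twice the average of the reciprocal gaps: 1/Δ_i^min ≤ (2/M)·Σ_{p ∈ [M]} 1/Δ_i^p. -/

import Mathlib

/-!
Under ε-dissimilarity the optimal means of two players differ by at most `ε`, so their gaps on a
fixed arm differ by at most `2ε` (`gap_le_gap_add`). If some gap of arm `i` exceeds `5ε`, then the
minimum gap `m` exceeds `3ε`, and every gap is at most `m + 2ε ≤ 2m`. Hence each reciprocal gap is
at least `1 / (2m)`, and averaging over the players gives the bound.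
-/

/-- The optimal mean reward `μ*^p = max_{i ∈ [K]} μ_i^p` of player `p`. -/
noncomputable def muStar {K M : ℕ} [NeZero K] (μ : Fin K → Fin M → ℝ) (p : Fin M) : ℝ :=
  Finset.univ.sup' Finset.univ_nonempty fun i => μ i p

/-- The suboptimality gap `Δ_i^p = μ*^p − μ_i^p` of arm `i` for player `p`. -/
noncomputable def gap {K M : ℕ} [NeZero K] (μ : Fin K → Fin M → ℝ) (i : Fin K) (p : Fin M) : ℝ :=
  muStar μ p - μ i p

/-- The minimum gap `Δ_i^min = min_{p ∈ [M]} Δ_i^p` of arm `i`. -/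
noncomputable def gapMin {K M : ℕ} [NeZero K] [NeZero M] (μ : Fin K → Fin M → ℝ)
    (i : Fin K) : ℝ :=
  Finset.univ.inf' Finset.univ_nonempty fun p => gap μ i p

lemma muStar_le_muStar_add {M K : ℕ} [NeZero K] {ε : ℝ} {μ : Fin K → Fin M → ℝ}
    (hdis : ∀ (i : Fin K) (p q : Fin M), |μ i p - μ i q| ≤ ε) (p q : Fin M) :
    muStar μ p ≤ muStar μ q + ε := by
  refine Finset.sup'_le _ _ fun j _ => ?_
  have h1 : μ j q ≤ muStar μ q :=
    Finset.le_sup' (fun i => μ i q) (Finset.mem_univ j)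
  linarith [(abs_le.mp (hdis j p q)).2]

lemma gap_le_gap_add {M K : ℕ} [NeZero K] {ε : ℝ} {μ : Fin K → Fin M → ℝ}
    (hdis : ∀ (i : Fin K) (p q : Fin M), |μ i p - μ i q| ≤ ε) (i : Fin K) (p q : Fin M) :
    gap μ i p ≤ gap μ i q + 2 * ε := by
  unfold gap
  linarith [muStar_le_muStar_add hdis p q, (abs_le.mp (hdis i p q)).1]

/-- For an ε-dissimilar M-player K-armed reward mean profile and any subpar arm `i ∈ I_ε`
(i.e. `∃ p, Δ_i^p > 5ε`), the reciprocal of the minimum gap is bounded by twice the average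
of the reciprocal gaps: `1/Δ_i^min ≤ (2/M) Σ_p 1/Δ_i^p`. -/
theorem subpar_inv_min_gap_le {M K : ℕ} [NeZero M] [NeZero K]
    (ε : ℝ) (hε : ε ∈ Set.Icc (0 : ℝ) 1)
    (μ : Fin K → Fin M → ℝ) (hμ : ∀ (i : Fin K) (p : Fin M), μ i p ∈ Set.Icc (0 : ℝ) 1)
    (hdis : ∀ (i : Fin K) (p q : Fin M), |μ i p - μ i q| ≤ ε) :
    ∀ i : Fin K, (∃ p : Fin M, gap μ i p > 5 * ε) →
      1 / gapMin μ i ≤ (2 / (M : ℝ)) * ∑ p : Fin M, 1 / gap μ i p := by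
  rintro i ⟨p₀, hp₀⟩
  obtain ⟨q, -, hq⟩ := Finset.exists_mem_eq_inf' (Finset.univ_nonempty (α := Fin M))
    (fun p => gap μ i p)
  have hmin : gapMin μ i = gap μ i q := hq
  have hle : ∀ p, gap μ i q ≤ gap μ i p := fun p =>
    hmin ▸ Finset.inf'_le (fun p => gap μ i p) (Finset.mem_univ p)
  have hε0 : 0 ≤ ε := hε.1
  have hq3 : 3 * ε < gap μ i q := by linarith [gap_le_gap_add hdis i p₀ q]
  have hq0 : 0 < gap μ i q := by linarith
  have hterm : ∀ p, 1 / (2 * gap μ i q) ≤ 1 / gap μ i p := fun p =>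
    one_div_le_one_div_of_le (hq0.trans_le (hle p)) (by linarith [gap_le_gap_add hdis i p q])
  have hM : (0 : ℝ) < M := Nat.cast_pos.mpr (NeZero.pos M)
  rw [hmin]
  calc 1 / gap μ i q = (2 / (M : ℝ)) * ∑ _p : Fin M, 1 / (2 * gap μ i q) := by
        rw [Finset.sum_const, Finset.card_univ, Fintype.card_fin, nsmul_eq_mul]
        field_simp
    _ ≤ (2 / (M : ℝ)) * ∑ p : Fin M, 1 / gap μ i p :=
        mul_le_mul_of_nonneg_left (Finset.sum_le_sum fun p _ => hterm p) (by positivity)
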